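/- Let (W,S) be a Coxeter system, c a Coxeter word (each generator appearing exactly once), and c^∞ the infinite periodic word ccc···. The c-sortable elements of W form a join-sublattice of the c^∞-sorting order that preserves cover relations, and hence the restriction of the c^∞-sorting order to c-sortable elements is a join-distributive lattice. -/

import Mathlib

namespace SortingPaper

variable {B : Type*} {M : CoxeterMatrix B} {W : Type*} [Group W]

/-- Lexicographic comparison of index sets. -/
def lexLE (A C : Finset ℕ) : Prop :=
  A = C ∨ ∃ k, k ∈ A ∧ k ∉ C ∧ ∀ j < k, (j ∈ A ↔ j ∈ C)

/-- The (finite) subword of a semi-infinite word `ω : ℕ → B` with index set `A`. -/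
def subwordInf (ω : ℕ → B) (A : Finset ℕ) : List B :=
  (A.sort (· ≤ ·)).map ω

/-- `A` is the index set of an ω-sorted word for the semi-infinite word `ω`. -/
def IsSortedInf (cs : CoxeterSystem M W) (ω : ℕ → B) (A : Finset ℕ) : Prop :=
  cs.IsReduced (subwordInf ω A) ∧
  ∀ C : Finset ℕ, cs.IsReduced (subwordInf ω C) →
    cs.wordProd (subwordInf ω C) = cs.wordProd (subwordInf ω A) → lexLE A C

/-- `A` is the c-sorted index set of a c-sortable element: it is `c^∞`-sorted and the
underlying letter sets of its consecutive blocks (copies of `c`) form a descending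
chain. -/
def Sortable [DecidableEq B] (cs : CoxeterSystem M W) (c : List B) (ω : ℕ → B)
    (A : Finset ℕ) : Prop :=
  IsSortedInf cs ω A ∧
  ∀ k : ℕ, ((A.filter fun i => i / c.length = k + 1).image fun i => ω i) ⊆
    ((A.filter fun i => i / c.length = k).image fun i => ω i)

/-!
A finite index set is sorted exactly when it is greedy: no letter `ω k`, whether or not `k` is in
the set, shortens the subword to its right. Let `A` and `C` be sorted with `C ⊈ A`, and let `x` be
the least element of `C \ A`. Then `insert x A` is again greedy. Otherwise, for the largest bad `k`,
the exchange condition yields `ω k * p = p * ω x`, where `p` is the subword of `A` strictly between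
`k` and `x`. As `C` agrees below `x` with a subset of `A`, the subword `q` of `C` between `k` and
`x` is a subword of `p`, so `q * ω x` lies below `ω k * p` in the Bruhat order; by the subword
property it is spelled by a subword of `ω k * p`, and greediness of `C` removes the letters of that
subword one at a time until `ω x = 1`.

If moreover `A` and `C` are sortable, the letter of `x` occurs in `C` in the preceding block, at an
index below `x`, hence in `A`; so `insert x A` is sortable. This augmentation property makes the
sortable index sets closed under unions and makes each of their covers add a single index.
-/

section InversionParity

open CoxeterSystem

variable (cs : CoxeterSystem M W)

theorem alternatingWord_two_mul (i j : B) (m : ℕ) :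
    alternatingWord i j (2 * m) = (List.replicate m [i, j]).flatten := by
  induction m with
  | zero => rfl
  | succ m ih =>
    rw [mul_add_one, alternatingWord_succ', alternatingWord_succ', ih]
    simp [List.replicate_succ]

theorem reverse_alternatingWord_two_mul (i j : B) (m : ℕ) :
    (alternatingWord i j (2 * m)).reverse = alternatingWord j i (2 * m) := by
  simp [alternatingWord_two_mul, List.reverse_flatten]

theorem leftInvSeq_alternatingWord_two_mul (i j : B) (m : ℕ) :
    cs.leftInvSeq (alternatingWord i j (2 * m)) =
      (List.range (2 * m)).map fun k => cs.wordProd (alternatingWord j i (2 * k + 1)) := by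
  refine List.ext_getElem (by simp) fun k hk _ => ?_
  rw [getElem_leftInvSeq_alternatingWord _ _ _ _ _ (by simpa using hk), List.getElem_map,
    List.getElem_range]

variable [DecidableEq W]

/-- The action of the simple reflection `s i` on `W × ZMod 2` that conjugates the first component
and flips the second one at `s i`; on pairs of a reflection and a sign this is the action of `W`
on its roots. -/
def rootAction (i : B) : Function.End (W × ZMod 2) :=
  fun p => (cs.simple i * p.1 * cs.simple i, p.2 + if p.1 = cs.simple i then 1 else 0)

theorem prod_map_rootAction_apply (l : List B) (p : W × ZMod 2) :
    (l.map (rootAction cs)).prod p =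
      (cs.wordProd l * p.1 * (cs.wordProd l)⁻¹, p.2 + (cs.rightInvSeq l).count p.1) := by
  induction l with
  | nil => simp [Function.End.one_def]
  | cons i l ih =>
    have hconj : cs.wordProd l * p.1 * (cs.wordProd l)⁻¹ = cs.simple i ↔
        (cs.wordProd l)⁻¹ * cs.simple i * cs.wordProd l = p.1 := by
      constructor <;> intro h <;> rw [← h] <;> group
    rw [List.map_cons, List.prod_cons]
    change rootAction cs i ((l.map (rootAction cs)).prod p) = _
    rw [ih]
    ext
    · simp [rootAction, wordProd_cons, mul_assoc]
    · simp [rootAction, rightInvSeq, List.count_cons, hconj, add_assoc]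

theorem even_count_rightInvSeq_alternatingWord (i j : B) (t : W) :
    Even ((cs.rightInvSeq (alternatingWord i j (2 * M i j))).count t) := by
  have hperiodic (k : ℕ) : cs.wordProd (alternatingWord i j (2 * (M i j + k) + 1)) =
      cs.wordProd (alternatingWord i j (2 * k + 1)) := by
    have hdiv (n : ℕ) : (2 * n + 1) / 2 = n := by lia
    simp [prod_alternatingWord_eq_mul_pow, hdiv, pow_add]
  rw [← List.count_reverse, ← leftInvSeq_reverse, reverse_alternatingWord_two_mul,
    leftInvSeq_alternatingWord_two_mul, two_mul, List.range_add, List.map_append, List.map_map,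
    List.count_append]
  simp [Function.comp_def, hperiodic]

theorem isLiftable_rootAction : M.IsLiftable (rootAction cs) := by
  intro i j
  have hpow : (rootAction cs i * rootAction cs j) ^ M i j =
      ((alternatingWord i j (2 * M i j)).map (rootAction cs)).prod := by
    simp [alternatingWord_two_mul, List.map_flatten, List.prod_flatten]
  have hword : cs.wordProd (alternatingWord i j (2 * M i j)) = 1 := by
    simp [prod_alternatingWord_eq_mul_pow]
  have hcount (t : W) :
      ((cs.rightInvSeq (alternatingWord i j (2 * M i j))).count t : ZMod 2) = 0 :=
    (ZMod.natCast_eq_zero_iff_even).2 (even_count_rightInvSeq_alternatingWord cs i j t)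
  funext p
  simp [hpow, prod_map_rootAction_apply, hword, hcount, Function.End.one_def]

/-- The parity of the number of occurrences of `t` in the right inversion sequence of any word
for `w`. -/
def inversionParity (w t : W) : ZMod 2 :=
  (cs.lift ⟨rootAction cs, isLiftable_rootAction cs⟩ w (t, 0)).2

theorem lift_rootAction_wordProd (l : List B) :
    cs.lift ⟨rootAction cs, isLiftable_rootAction cs⟩ (cs.wordProd l) =
      (l.map (rootAction cs)).prod := by
  rw [wordProd, map_list_prod, List.map_map]
  congr! 2
  exact funext fun i => cs.lift_apply_simple _ i

theorem inversionParity_wordProd (l : List B) (t : W) :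
    inversionParity cs (cs.wordProd l) t = (cs.rightInvSeq l).count t := by
  simp [inversionParity, lift_rootAction_wordProd, prod_map_rootAction_apply]

theorem lift_rootAction_apply (w : W) (p : W × ZMod 2) :
    cs.lift ⟨rootAction cs, isLiftable_rootAction cs⟩ w p =
      (w * p.1 * w⁻¹, p.2 + inversionParity cs w p.1) := by
  obtain ⟨l, rfl⟩ := cs.wordProd_surjective w
  rw [lift_rootAction_wordProd, prod_map_rootAction_apply, inversionParity_wordProd]

theorem inversionParity_mul (u w t : W) :
    inversionParity cs (u * w) t =
      inversionParity cs w t + inversionParity cs u (w * t * w⁻¹) := by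
  rw [inversionParity, map_mul]
  change (cs.lift ⟨rootAction cs, isLiftable_rootAction cs⟩ u
    (cs.lift ⟨rootAction cs, isLiftable_rootAction cs⟩ w (t, 0))).2 = _
  rw [lift_rootAction_apply, lift_rootAction_apply, zero_add]

theorem inversionParity_one (t : W) : inversionParity cs 1 t = 0 := by
  simpa using inversionParity_wordProd cs [] t

theorem inversionParity_simple (i : B) (t : W) :
    inversionParity cs (cs.simple i) t = if cs.simple i = t then 1 else 0 := by
  simpa [List.count_singleton] using inversionParity_wordProd cs [i] t

theorem inversionParity_self {t : W} (ht : cs.IsReflection t) : inversionParity cs t t = 1 := by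
  obtain ⟨u, i, rfl⟩ := ht
  have hcancel := inversionParity_mul cs u u⁻¹ (u * cs.simple i * u⁻¹)
  have hconj : u⁻¹ * (u * cs.simple i * u⁻¹) * u⁻¹⁻¹ = cs.simple i := by group
  rw [mul_inv_cancel, inversionParity_one, hconj] at hcancel
  rw [inversionParity_mul, inversionParity_mul, hconj, mul_inv_cancel_right,
    inversionParity_simple, if_pos rfl, add_left_comm, ← hcancel, add_zero]

theorem mem_rightInvSeq_of_inversionParity_eq_one {l : List B} {t : W}
    (h : inversionParity cs (cs.wordProd l) t = 1) : t ∈ cs.rightInvSeq l := by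
  by_contra hmem
  simp [inversionParity_wordProd, List.count_eq_zero_of_not_mem hmem] at h

theorem isRightInversion_of_inversionParity_eq_one {w t : W}
    (h : inversionParity cs w t = 1) : cs.IsRightInversion w t := by
  obtain ⟨l, hl, rfl⟩ := cs.exists_isReduced w
  exact cs.isRightInversion_of_mem_rightInvSeq hl (mem_rightInvSeq_of_inversionParity_eq_one cs h)

theorem isRightInversion_iff_inversionParity_eq_one {w t : W} :
    cs.IsRightInversion w t ↔ cs.IsReflection t ∧ inversionParity cs w t = 1 := by
  refine ⟨fun h => ⟨h.1, ?_⟩, fun h => isRightInversion_of_inversionParity_eq_one cs h.2⟩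
  by_contra hne
  have hzero : inversionParity cs w t = 0 := by
    generalize inversionParity cs w t = a at hne
    decide +revert
  have hwt : inversionParity cs (w * t) t = 1 := by
    rw [inversionParity_mul, inversionParity_self cs h.1, mul_inv_cancel_right, hzero, add_zero]
  exact h.1.isRightInversion_mul_left_iff.1 (isRightInversion_of_inversionParity_eq_one cs hwt) h

end InversionParity

section Exchange

open CoxeterSystem

variable (cs : CoxeterSystem M W)

theorem isRightInversion_simple_mul_iff {w t : W} {i : B} (h : w * t * w⁻¹ ≠ cs.simple i) :
    cs.IsRightInversion (cs.simple i * w) t ↔ cs.IsRightInversion w t := by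
  classical
  simp [isRightInversion_iff_inversionParity_eq_one, inversionParity_mul, inversionParity_simple,
    h.symm]

theorem exists_wordProd_mul_eq_eraseIdx {l : List B} {t : W}
    (h : cs.IsRightInversion (cs.wordProd l) t) :
    ∃ j < l.length, cs.wordProd l * t = cs.wordProd (l.eraseIdx j) := by
  classical
  have hmem := mem_rightInvSeq_of_inversionParity_eq_one cs
    ((isRightInversion_iff_inversionParity_eq_one cs).1 h).2
  obtain ⟨j, hj, rfl⟩ := List.mem_iff_getElem.1 hmem
  refine ⟨j, by simpa using hj, ?_⟩
  rw [← List.getD_eq_getElem _ 1 hj, wordProd_mul_getD_rightInvSeq]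

theorem isReflection_inv_mul_simple_mul (w : W) (i : B) :
    cs.IsReflection (w⁻¹ * cs.simple i * w) := by
  simpa using (cs.isReflection_simple i).conj w⁻¹

theorem isRightInversion_of_isLeftDescent {w : W} {i : B} (h : cs.IsLeftDescent w i) :
    cs.IsRightInversion w (w⁻¹ * cs.simple i * w) :=
  ⟨isReflection_inv_mul_simple_mul cs w i, by simpa [mul_assoc, IsLeftDescent] using h⟩

theorem exists_simple_mul_wordProd_eq_eraseIdx {l : List B} {i : B}
    (h : cs.IsLeftDescent (cs.wordProd l) i) :
    ∃ j < l.length, cs.simple i * cs.wordProd l = cs.wordProd (l.eraseIdx j) := by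
  simpa [mul_assoc] using
    exists_wordProd_mul_eq_eraseIdx cs (isRightInversion_of_isLeftDescent cs h)

theorem isReduced_cons_iff {i : B} {l : List B} :
    cs.IsReduced (i :: l) ↔ cs.IsReduced l ∧ ¬ cs.IsLeftDescent (cs.wordProd l) i := by
  have hle := cs.length_wordProd_le l
  have hmul := cs.length_simple_mul (cs.wordProd l) i
  rw [not_isLeftDescent_iff, CoxeterSystem.IsReduced, CoxeterSystem.IsReduced,
    wordProd_cons, List.length_cons]
  lia

theorem isReduced_of_append_left {a b : List B} (h : cs.IsReduced (a ++ b)) : cs.IsReduced a := by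
  simpa using h.take a.length

theorem isReduced_of_append_right {a b : List B} (h : cs.IsReduced (a ++ b)) :
    cs.IsReduced b := by
  simpa using h.drop a.length

theorem isLeftDescent_simple_mul_iff {w : W} {i : B} :
    cs.IsLeftDescent (cs.simple i * w) i ↔ ¬ cs.IsLeftDescent w i := by
  rw [isLeftDescent_iff_not_isLeftDescent_mul, simple_mul_simple_cancel_left]

theorem not_isLeftDescent_of_append {a b : List B} {i : B} (hred : cs.IsReduced (a ++ b))
    (h : ¬ cs.IsLeftDescent (cs.wordProd (a ++ b)) i) :
    ¬ cs.IsLeftDescent (cs.wordProd a) i :=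
  ((isReduced_cons_iff cs).1 (isReduced_of_append_left cs (b := b)
    ((isReduced_cons_iff cs).2 ⟨hred, h⟩))).2

theorem simple_ne_one (i : B) : cs.simple i ≠ 1 := fun h => by
  simpa [h] using cs.length_simple i

theorem wordProd_cons_eq_wordProd_concat {p v : List B} {i j : B}
    (hpv : cs.IsReduced (p ++ v)) (hpjv : cs.IsReduced (p ++ j :: v))
    (hi : ¬ cs.IsLeftDescent (cs.wordProd (p ++ v)) i)
    (hi' : cs.IsLeftDescent (cs.wordProd (p ++ j :: v)) i) :
    cs.wordProd (i :: p) = cs.wordProd (p ++ [j]) := by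
  set t := (cs.wordProd v)⁻¹ * cs.simple j * cs.wordProd v
  have hmul : cs.wordProd (p ++ j :: v) * t = cs.wordProd (p ++ v) := by
    simp [t, wordProd_append, wordProd_cons, mul_assoc]
  have ht : cs.IsRightInversion (cs.wordProd (p ++ j :: v)) t := by
    refine ⟨isReflection_inv_mul_simple_mul cs _ _, ?_⟩
    rw [hmul, hpv.eq, hpjv.eq]
    simp
  by_contra hne
  have hconj : cs.wordProd (p ++ j :: v) * t * (cs.wordProd (p ++ j :: v))⁻¹ ≠ cs.simple i := by
    refine fun h => hne ?_
    simp [wordProd_append, wordProd_cons, ← h, t, mul_assoc]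
  have hlt := ((isRightInversion_simple_mul_iff cs hconj).2 ht).2
  rw [mul_assoc, hmul, (cs.not_isLeftDescent_iff).1 hi, hpv.eq] at hlt
  have hdesc := (cs.isLeftDescent_iff).1 hi'
  rw [hpjv.eq] at hdesc
  simp only [List.length_append, List.length_cons] at hlt hdesc
  lia

end Exchange

section Bruhat

open CoxeterSystem
open scoped List

variable (cs : CoxeterSystem M W)

/-- The arrow `u → w` of the Bruhat graph. -/
def BruhatStep (u w : W) : Prop := ∃ t, cs.IsRightInversion w t ∧ w * t = u

/-- The Bruhat order. -/
def BruhatLE : W → W → Prop := Relation.ReflTransGen (BruhatStep cs)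

theorem BruhatStep.simple_mul {u w : W} (h : BruhatStep cs u w) (i : B) :
    cs.simple i * u = w ∨ BruhatStep cs (cs.simple i * u) (cs.simple i * w) := by
  obtain ⟨t, ht, rfl⟩ := h
  by_cases hconj : w * t * w⁻¹ = cs.simple i
  · left
    rw [← hconj, mul_assoc (w * t), inv_mul_cancel_left, mul_assoc, ht.1.mul_self, mul_one]
  · exact Or.inr ⟨t, (isRightInversion_simple_mul_iff cs hconj).2 ht, mul_assoc _ _ _⟩

theorem BruhatLE.simple_mul {u w : W} (h : BruhatLE cs u w) (i : B) :
    BruhatLE cs (cs.simple i * u) w ∨ BruhatLE cs (cs.simple i * u) (cs.simple i * w) := by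
  induction h with
  | refl => exact Or.inr .refl
  | tail _ hstep ih =>
    rcases ih with ih | ih
    · exact Or.inl (ih.tail hstep)
    · rcases hstep.simple_mul cs i with heq | hstep'
      · exact Or.inl (heq ▸ ih)
      · exact Or.inr (ih.tail hstep')

theorem bruhatStep_simple_mul {w : W} {i : B} (h : ¬ cs.IsLeftDescent w i) :
    BruhatStep cs w (cs.simple i * w) :=
  ⟨_, isRightInversion_of_isLeftDescent cs ((isLeftDescent_simple_mul_iff cs).2 h),
    by simp [mul_assoc]⟩

theorem bruhatLE_of_sublist {q a : List B} (ha : cs.IsReduced a) (h : q <+ a) :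
    BruhatLE cs (cs.wordProd q) (cs.wordProd a) := by
  induction h with
  | slnil => exact .refl
  | cons i _ ih =>
    obtain ⟨ha, hi⟩ := (isReduced_cons_iff cs).1 ha
    rw [wordProd_cons]
    exact (ih ha).tail (bruhatStep_simple_mul cs hi)
  | cons_cons i _ ih =>
    obtain ⟨ha, hi⟩ := (isReduced_cons_iff cs).1 ha
    rw [wordProd_cons, wordProd_cons]
    rcases (ih ha).simple_mul cs i with h | h
    · exact h.tail (bruhatStep_simple_mul cs hi)
    · exact h

/-- The elements of `W` spelled by a (not necessarily reduced) subword of `b`. -/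
def subwordProds (b : List B) : Set W := cs.wordProd '' {l | l <+ b}

theorem BruhatLE.mem_subwordProds {u : W} {b : List B} (h : BruhatLE cs u (cs.wordProd b)) :
    u ∈ subwordProds cs b := by
  induction h using Relation.ReflTransGen.head_induction_on with
  | refl => exact ⟨b, .refl b, rfl⟩
  | head hstep _ ih =>
    obtain ⟨l, hl, rfl⟩ := ih
    obtain ⟨t, ht, rfl⟩ := hstep
    obtain ⟨j, -, hj⟩ := exists_wordProd_mul_eq_eraseIdx cs ht
    exact ⟨l.eraseIdx j, (l.eraseIdx_sublist j).trans hl, hj.symm⟩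

theorem simple_mul_mem_subwordProds_cons {u : W} {i : B} {b : List B}
    (h : u ∈ subwordProds cs (i :: b)) : cs.simple i * u ∈ subwordProds cs (i :: b) := by
  obtain ⟨l, hl, rfl⟩ := h
  rcases List.sublist_cons_iff.1 hl with hl | ⟨r, rfl, hr⟩
  · exact ⟨i :: l, hl.cons_cons i, cs.wordProd_cons i l⟩
  · exact ⟨r, hr.cons i, by simp [wordProd_cons]⟩

theorem mem_subwordProds_of_not_isLeftDescent {u : W} {i : B} {b : List B}
    (h : u ∈ subwordProds cs (i :: b)) (hi : ¬ cs.IsLeftDescent u i) : u ∈ subwordProds cs b := by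
  obtain ⟨l, hl, rfl⟩ := h
  rcases List.sublist_cons_iff.1 hl with hl | ⟨r, rfl, hr⟩
  · exact ⟨l, hl, rfl⟩
  · rw [wordProd_cons, isLeftDescent_simple_mul_iff, not_not] at hi
    obtain ⟨j, -, hj⟩ := exists_simple_mul_wordProd_eq_eraseIdx cs hi
    exact ⟨r.eraseIdx j, (r.eraseIdx_sublist j).trans hr, by rw [wordProd_cons, hj]⟩

end Bruhat

section SubwordInf

open scoped List

variable (ω : ℕ → B) {A C : Finset ℕ}

theorem sort_union_of_lt {α : Type*} [LinearOrder α] {A C : Finset α}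
    (h : ∀ a ∈ A, ∀ c ∈ C, a < c) : (A ∪ C).sort = A.sort ++ C.sort := by
  induction A using Finset.induction_on_min with
  | empty => simp
  | insert a A ha ih =>
    have hlt : ∀ b ∈ A ∪ C, a < b := by grind
    rw [Finset.insert_union, Finset.sort_insert _ (fun b hb => (hlt b hb).le)
      (fun hmem => (hlt a hmem).false), ih (by grind), Finset.sort_insert _
      (fun b hb => (ha b hb).le) (fun hmem => (ha a hmem).false), List.cons_append]

theorem subwordInf_union_of_lt (h : ∀ a ∈ A, ∀ c ∈ C, a < c) :
    subwordInf ω (A ∪ C) = subwordInf ω A ++ subwordInf ω C := by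
  rw [subwordInf, sort_union_of_lt h, List.map_append, subwordInf, subwordInf]

theorem subwordInf_empty : subwordInf ω ∅ = [] := by simp [subwordInf]

theorem subwordInf_insert_of_lt {a : ℕ} (h : ∀ c ∈ C, a < c) :
    subwordInf ω (insert a C) = ω a :: subwordInf ω C := by
  rw [Finset.insert_eq, subwordInf_union_of_lt ω (by simpa using h)]
  simp [subwordInf]

theorem subwordInf_sublist_of_subset (h : A ⊆ C) : subwordInf ω A <+ subwordInf ω C :=
  (List.sublist_of_subperm_of_sortedLE
    (List.subperm_of_subset (A.sort_nodup _) fun a ha => by simpa using h (by simpa using ha))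
    (A.sortedLT_sort.sortedLE) (C.sortedLT_sort.sortedLE)).map ω

theorem exists_subset_subwordInf_eq {l : List B} (h : l <+ subwordInf ω A) :
    ∃ D ⊆ A, subwordInf ω D = l := by
  obtain ⟨r, hr, rfl⟩ := List.sublist_map_iff.1 h
  refine ⟨r.toFinset, fun a ha => by simpa using hr.subset (by simpa using ha), ?_⟩
  rw [subwordInf, (List.toFinset_sort _ ((A.sort_nodup _).sublist hr)).2
    ((A.pairwise_sort _).sublist hr)]

theorem subwordInf_eq_append_cons {k : ℕ} (hk : k ∈ A) :
    subwordInf ω A = subwordInf ω {i ∈ A | i < k} ++ ω k :: subwordInf ω {i ∈ A | k < i} := by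
  rw [← subwordInf_insert_of_lt ω (by simp), ← subwordInf_union_of_lt ω (by grind)]
  congr 1
  grind

theorem subwordInf_eq_append {k : ℕ} (hk : k ∉ A) :
    subwordInf ω A = subwordInf ω {i ∈ A | i < k} ++ subwordInf ω {i ∈ A | k < i} := by
  rw [← subwordInf_union_of_lt ω (by grind)]
  congr 1
  grind

theorem subwordInf_filter_lt_eq_append_cons {k x : ℕ} (hkx : k < x) (hx : x ∈ A) :
    subwordInf ω {i ∈ A | k < i} =
      subwordInf ω {i ∈ A | k < i ∧ i < x} ++ ω x :: subwordInf ω {i ∈ A | x < i} := by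
  have htail : {i ∈ A | k < i ∧ x < i} = {i ∈ A | x < i} := by grind
  rw [subwordInf_eq_append_cons ω (k := x) (by simp [hx, hkx]), Finset.filter_filter,
    Finset.filter_filter, htail]

theorem subwordInf_filter_lt_eq_append {k x : ℕ} (hkx : k < x) (hx : x ∉ A) :
    subwordInf ω {i ∈ A | k < i} =
      subwordInf ω {i ∈ A | k < i ∧ i < x} ++ subwordInf ω {i ∈ A | x < i} := by
  have htail : {i ∈ A | k < i ∧ x < i} = {i ∈ A | x < i} := by grind
  rw [subwordInf_eq_append ω (k := x) (by simp [hx]), Finset.filter_filter, Finset.filter_filter,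
    htail]

end SubwordInf

section IsGreedy

open CoxeterSystem

variable (cs : CoxeterSystem M W) (ω : ℕ → B) {A C : Finset ℕ}

/-- The local form of `IsSortedInf`: read from right to left, `A` contains every index whose
letter would shorten the subword read so far, and every letter it does contain lengthens it. Both
requirements say that no letter `ω k` shortens the subword to the right of `k`. -/
def IsGreedy (A : Finset ℕ) : Prop :=
  ∀ k, ¬ cs.IsLeftDescent (cs.wordProd (subwordInf ω {i ∈ A | k < i})) (ω k)

theorem isReduced_subwordInf
    (h : ∀ k ∈ A, ¬ cs.IsLeftDescent (cs.wordProd (subwordInf ω {i ∈ A | k < i})) (ω k)) :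
    cs.IsReduced (subwordInf ω A) := by
  induction A using Finset.induction_on_min with
  | empty => simp [subwordInf_empty, CoxeterSystem.IsReduced]
  | insert a A ha ih =>
    have htop : {i ∈ insert a A | a < i} = A := by grind
    have htail : ∀ k ∈ A, {i ∈ insert a A | k < i} = {i ∈ A | k < i} := by grind
    rw [subwordInf_insert_of_lt ω ha, isReduced_cons_iff]
    refine ⟨ih fun k hk => ?_, ?_⟩
    · simpa [htail k hk] using h k (Finset.mem_insert_of_mem hk)
    · simpa [htop] using h a (Finset.mem_insert_self a A)

theorem isReduced_subwordInf_filter_lt {k : ℕ}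
    (h : ∀ m, k < m → ¬ cs.IsLeftDescent (cs.wordProd (subwordInf ω {i ∈ A | m < i})) (ω m)) :
    cs.IsReduced (subwordInf ω {i ∈ A | k < i}) := by
  refine isReduced_subwordInf cs ω fun m hm => ?_
  have hkm : k < m := (Finset.mem_filter.1 hm).2
  have htail : {i ∈ {i ∈ A | k < i} | m < i} = {i ∈ A | m < i} := by grind
  rw [htail]
  exact h m hkm

theorem not_lexLE {k : ℕ} (hA : k ∉ A) (hC : k ∈ C) (hlow : ∀ j < k, (j ∈ A ↔ j ∈ C)) :
    ¬ lexLE A C := by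
  rintro (rfl | ⟨m, hmA, hmC, hm⟩)
  · exact hA hC
  · rcases lt_trichotomy m k with hlt | rfl | hlt
    · exact hmC ((hlow m hlt).1 hmA)
    · exact hA hmA
    · exact hA ((hm k hlt).2 hC)

theorem exists_subwordInf_of_isLeftDescent {k : ℕ} (hk : k ∉ A)
    (hred : cs.IsReduced (subwordInf ω A))
    (hdesc : cs.IsLeftDescent (cs.wordProd (subwordInf ω {i ∈ A | k < i})) (ω k)) :
    ∃ C, k ∈ C ∧ (∀ j < k, (j ∈ A ↔ j ∈ C)) ∧ cs.IsReduced (subwordInf ω C) ∧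
      cs.wordProd (subwordInf ω C) = cs.wordProd (subwordInf ω A) := by
  obtain ⟨j, hj, hexch⟩ := exists_simple_mul_wordProd_eq_eraseIdx cs hdesc
  obtain ⟨D, hD, hDword⟩ :=
    exists_subset_subwordInf_eq ω (List.eraseIdx_sublist (subwordInf ω {i ∈ A | k < i}) j)
  have hkD : ∀ i ∈ D, k < i := fun i hi => (Finset.mem_filter.1 (hD hi)).2
  have hC : subwordInf ω ({i ∈ A | i < k} ∪ insert k D) =
      subwordInf ω {i ∈ A | i < k} ++ ω k :: subwordInf ω D := by
    rw [subwordInf_union_of_lt ω (by grind), subwordInf_insert_of_lt ω hkD]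
  have hprod : cs.wordProd (subwordInf ω ({i ∈ A | i < k} ∪ insert k D)) =
      cs.wordProd (subwordInf ω A) := by
    rw [hC, subwordInf_eq_append ω hk, wordProd_append, wordProd_append, wordProd_cons, hDword,
      ← hexch, simple_mul_simple_cancel_left]
  refine ⟨_, by simp, by grind, ?_, hprod⟩
  have hlen := List.length_eraseIdx_add_one hj
  rw [CoxeterSystem.IsReduced, hprod, hred.eq, subwordInf_eq_append ω hk, hC, hDword]
  simp only [List.length_append, List.length_cons]
  lia

theorem IsSortedInf.isGreedy (h : IsSortedInf cs ω A) : IsGreedy cs ω A := by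
  intro k hdesc
  obtain ⟨hred, hmin⟩ := h
  by_cases hk : k ∈ A
  · rw [subwordInf_eq_append_cons ω hk] at hred
    exact ((isReduced_cons_iff cs).1 (isReduced_of_append_right cs hred)).2 hdesc
  · obtain ⟨C, hkC, hlow, hCred, hprod⟩ := exists_subwordInf_of_isLeftDescent cs ω hk hred hdesc
    exact not_lexLE hk hkC hlow (hmin C hCred hprod)

theorem isLeftDescent_of_wordProd_eq {k : ℕ} (hA : k ∉ A) (hC : k ∈ C)
    (hlow : ∀ j < k, (j ∈ A ↔ j ∈ C)) (hred : cs.IsReduced (subwordInf ω C))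
    (hprod : cs.wordProd (subwordInf ω C) = cs.wordProd (subwordInf ω A)) :
    cs.IsLeftDescent (cs.wordProd (subwordInf ω {i ∈ A | k < i})) (ω k) := by
  have hbelow : {i ∈ C | i < k} = {i ∈ A | i < k} := by grind
  rw [subwordInf_eq_append_cons ω hC, hbelow] at hred hprod
  rw [subwordInf_eq_append ω hA, wordProd_append, wordProd_append] at hprod
  rw [← mul_left_cancel hprod, wordProd_cons, isLeftDescent_simple_mul_iff]
  exact ((isReduced_cons_iff cs).1 (isReduced_of_append_right cs hred)).2

theorem IsGreedy.isSortedInf (h : IsGreedy cs ω A) : IsSortedInf cs ω A := by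
  refine ⟨isReduced_subwordInf cs ω fun k _ => h k, fun C hred hprod => ?_⟩
  by_cases hAC : A = C
  · exact Or.inl hAC
  have hdiff : ∃ k, ¬ (k ∈ A ↔ k ∈ C) := by simpa [Finset.ext_iff] using hAC
  obtain ⟨k, hk, hfirst⟩ := Nat.findX hdiff
  have hlow : ∀ j < k, (j ∈ A ↔ j ∈ C) := fun j hj => not_not.1 (hfirst j hj)
  by_cases hA : k ∈ A
  · exact Or.inr ⟨k, hA, by tauto, hlow⟩
  · exact absurd (isLeftDescent_of_wordProd_eq cs ω hA (by tauto) hlow hred hprod) (h k)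

theorem isSortedInf_iff_isGreedy : IsSortedInf cs ω A ↔ IsGreedy cs ω A :=
  ⟨IsSortedInf.isGreedy cs ω, IsGreedy.isSortedInf cs ω⟩

theorem wordProd_subwordInf_mul_notMem_subwordProds {I D : Finset ℕ} {u : W} (hu : u ≠ 1)
    (hDI : D ⊆ I)
    (h : ∀ m ∈ I,
      ¬ cs.IsLeftDescent (cs.wordProd (subwordInf ω {i ∈ D | m < i}) * u) (ω m)) :
    cs.wordProd (subwordInf ω D) * u ∉ subwordProds cs (subwordInf ω I) := by
  induction I using Finset.induction_on_min generalizing D with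
  | empty =>
    obtain rfl := Finset.subset_empty.1 hDI
    rintro ⟨l, hl, he⟩
    simp_all [subwordInf_empty]
  | insert a I ha ih =>
    have htail : ∀ m ∈ I, {i ∈ D.erase a | m < i} = {i ∈ D | m < i} := by grind
    have htop : {i ∈ D | a < i} = D.erase a := by grind
    have hD' : cs.wordProd (subwordInf ω (D.erase a)) * u ∉
        subwordProds cs (ω a :: subwordInf ω I) := fun hmem =>
      ih (by grind) (fun m hm => by simpa [htail m hm] using h m (Finset.mem_insert_of_mem hm))
        (mem_subwordProds_of_not_isLeftDescent cs hmem
          (by simpa [htop] using h a (Finset.mem_insert_self a I)))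
    rw [subwordInf_insert_of_lt ω ha]
    by_cases haD : a ∈ D
    · rw [← Finset.insert_erase haD, subwordInf_insert_of_lt ω (by grind), wordProd_cons,
        mul_assoc]
      exact fun hmem => hD' (by simpa using simple_mul_mem_subwordProds_cons cs hmem)
    · rwa [← Finset.erase_eq_of_notMem haD]

theorem IsGreedy.not_isLeftDescent_concat (h : IsGreedy cs ω A) {k x : ℕ} (hkx : k < x)
    (hx : x ∈ A) :
    ¬ cs.IsLeftDescent (cs.wordProd (subwordInf ω {i ∈ A | k < i ∧ i < x} ++ [ω x])) (ω k) := by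
  have hsplit : subwordInf ω {i ∈ A | k < i} =
      (subwordInf ω {i ∈ A | k < i ∧ i < x} ++ [ω x]) ++ subwordInf ω {i ∈ A | x < i} := by
    rw [subwordInf_filter_lt_eq_append_cons ω hkx hx, List.append_cons]
  have hred := isReduced_subwordInf_filter_lt cs ω (k := k) fun m _ => h m
  rw [hsplit] at hred
  exact not_isLeftDescent_of_append cs hred (hsplit ▸ h k)

theorem IsGreedy.not_isLeftDescent_insert (hA : IsGreedy cs ω A) (hC : IsGreedy cs ω C)
    {k x : ℕ} (hkx : k < x) (hxC : x ∈ C) (hxA : x ∉ A) (hlow : ∀ i ∈ C, i < x → i ∈ A)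
    (hred : cs.IsReduced (subwordInf ω {i ∈ insert x A | k < i})) :
    ¬ cs.IsLeftDescent (cs.wordProd (subwordInf ω {i ∈ insert x A | k < i})) (ω k) := by
  intro hdesc
  set p := {i ∈ A | k < i ∧ i < x}
  set q := {i ∈ C | k < i ∧ i < x}
  have hqp : q ⊆ p := by grind
  have hinsert : subwordInf ω {i ∈ insert x A | k < i} =
      subwordInf ω p ++ ω x :: subwordInf ω {i ∈ A | x < i} := by
    have hmid : {i ∈ insert x A | k < i ∧ i < x} = p := by grind
    have htail : {i ∈ insert x A | x < i} = {i ∈ A | x < i} := by grind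
    rw [subwordInf_filter_lt_eq_append_cons ω hkx (Finset.mem_insert_self x A), hmid, htail]
  have hAred := isReduced_subwordInf_filter_lt cs ω (k := k) fun m _ => hA m
  have hAk := hA k
  rw [subwordInf_filter_lt_eq_append ω hkx hxA] at hAred hAk
  rw [hinsert] at hred hdesc
  have hcomm : cs.wordProd (ω k :: subwordInf ω p) = cs.wordProd (subwordInf ω p ++ [ω x]) :=
    wordProd_cons_eq_wordProd_concat cs hAred hred hAk hdesc
  have hpred : cs.IsReduced (subwordInf ω p ++ [ω x]) :=
    isReduced_of_append_left cs (by rwa [← List.append_cons])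
  have hqx : cs.wordProd (subwordInf ω q ++ [ω x]) ∈ subwordProds cs (ω k :: subwordInf ω p) := by
    refine BruhatLE.mem_subwordProds cs (hcomm ▸ bruhatLE_of_sublist cs hpred ?_)
    exact (subwordInf_sublist_of_subset ω hqp).append (.refl _)
  have hqx' := mem_subwordProds_of_not_isLeftDescent cs hqx
    (hC.not_isLeftDescent_concat cs ω hkx hxC)
  rw [wordProd_append, wordProd_singleton] at hqx'
  refine wordProd_subwordInf_mul_notMem_subwordProds cs ω (simple_ne_one cs _) hqp
    (fun m hm => ?_) hqx'
  have htail : {i ∈ q | m < i} = {i ∈ C | m < i ∧ i < x} := by grind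
  rw [htail, ← wordProd_singleton, ← wordProd_append]
  exact hC.not_isLeftDescent_concat cs ω (by grind) hxC

protected theorem IsGreedy.insert (hA : IsGreedy cs ω A) (hC : IsGreedy cs ω C) {x : ℕ}
    (hxC : x ∈ C) (hxA : x ∉ A) (hlow : ∀ i ∈ C, i < x → i ∈ A) :
    IsGreedy cs ω (insert x A) := by
  intro k
  induction hd : x - k using Nat.strong_induction_on generalizing k with
  | _ d ih =>
    rcases lt_or_ge k x with hkx | hxk
    · refine hA.not_isLeftDescent_insert cs ω hC hkx hxC hxA hlow ?_
      exact isReduced_subwordInf_filter_lt cs ω fun m hm => ih (x - m) (by lia) m rfl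
    · have htail : {i ∈ insert x A | k < i} = {i ∈ A | k < i} := by grind
      simpa [htail] using hA k

protected theorem IsSortedInf.insert (hA : IsSortedInf cs ω A) (hC : IsSortedInf cs ω C) {x : ℕ}
    (hxC : x ∈ C) (hxA : x ∉ A) (hlow : ∀ i ∈ C, i < x → i ∈ A) :
    IsSortedInf cs ω (insert x A) := by
  rw [isSortedInf_iff_isGreedy] at *
  exact hA.insert cs ω hC hxC hxA hlow

theorem isSortedInf_empty : IsSortedInf cs ω ∅ := by
  rw [isSortedInf_iff_isGreedy]
  intro k
  simpa [subwordInf_empty] using cs.not_isLeftDescent_one (ω k)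

end IsGreedy

section Augmentation

variable {α : Type*} [DecidableEq α] {F : Finset α → Prop}

theorem union_of_augmentation
    (haug : ∀ A C, F A → F C → ¬ C ⊆ A → ∃ x ∈ C \ A, F (insert x A)) {A C : Finset α}
    (hA : F A) (hC : F C) : F (A ∪ C) := by
  induction hd : (C \ A).card generalizing A with
  | zero =>
    rwa [Finset.union_eq_left.2 (by simpa using hd)]
  | succ d ih =>
    have hCA : ¬ C ⊆ A := fun h => by simp [Finset.sdiff_eq_empty_iff_subset.2 h] at hd
    obtain ⟨x, hx, hxA⟩ := haug A C hA hC hCA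
    have hcard : (C \ insert x A).card = d := by
      rw [Finset.sdiff_insert, Finset.card_erase_of_mem hx, hd, Nat.add_sub_cancel]
    have hxC : x ∈ A ∪ C := Finset.mem_union_right A (Finset.mem_sdiff.1 hx).1
    simpa [Finset.insert_union, hxC] using ih hxA hcard

theorem covBy_of_augmentation
    (haug : ∀ A C, F A → F C → ¬ C ⊆ A → ∃ x ∈ C \ A, F (insert x A)) {A C : Finset α}
    (hA : F A) (hC : F C) (hAC : A ⊂ C) (hcover : ¬ ∃ D, F D ∧ A ⊂ D ∧ D ⊂ C) : A ⋖ C := by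
  obtain ⟨x, hx, hxA⟩ := haug A C hA hC hAC.not_subset
  obtain ⟨hxC, hx⟩ := Finset.mem_sdiff.1 hx
  have hsub : insert x A ⊆ C := Finset.insert_subset hxC hAC.subset
  have heq : insert x A = C := by
    by_contra hne
    exact hcover ⟨_, hxA, Finset.ssubset_insert hx, hsub.ssubset_of_ne hne⟩
  exact heq ▸ Finset.covBy_insert hx

end Augmentation

section Sortable

variable [DecidableEq B] {cs : CoxeterSystem M W} {c : List B} {ω : ℕ → B} {A C : Finset ℕ}

theorem sortable_empty : Sortable cs c ω ∅ :=
  ⟨isSortedInf_empty cs ω, by simp⟩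

protected theorem Sortable.insert (hA : Sortable cs c ω A) (hC : Sortable cs c ω C) {x : ℕ}
    (hxC : x ∈ C) (hxA : x ∉ A) (hlow : ∀ i ∈ C, i < x → i ∈ A) :
    Sortable cs c ω (insert x A) := by
  refine ⟨hA.1.insert cs ω hC.1 hxC hxA hlow, fun k b hb => ?_⟩
  obtain ⟨i, hi, rfl⟩ := Finset.mem_image.1 hb
  obtain ⟨hi, hik⟩ := Finset.mem_filter.1 hi
  suffices ∃ j ∈ A, j / c.length = k ∧ ω j = ω i by
    obtain ⟨j, hj, hjk, hji⟩ := this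
    exact Finset.mem_image.2 ⟨j, by simp [hj, hjk], hji⟩
  rcases Finset.mem_insert.1 hi with rfl | hi
  · have hblock := hC.2 k (Finset.mem_image_of_mem ω (Finset.mem_filter.2 ⟨hxC, hik⟩))
    obtain ⟨j, hj, hji⟩ := Finset.mem_image.1 hblock
    obtain ⟨hj, hjk⟩ := Finset.mem_filter.1 hj
    exact ⟨j, hlow j hj (Nat.lt_of_div_lt_div (c := c.length) (by lia)), hjk, hji⟩
  · have hblock := hA.2 k (Finset.mem_image_of_mem ω (Finset.mem_filter.2 ⟨hi, hik⟩))
    simpa [and_assoc] using hblock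

theorem Sortable.exists_insert (hA : Sortable cs c ω A) (hC : Sortable cs c ω C)
    (hCA : ¬ C ⊆ A) : ∃ x ∈ C \ A, Sortable cs c ω (insert x A) := by
  obtain ⟨x, hx, hmin⟩ := (C \ A).exists_minimal (Finset.sdiff_nonempty.2 hCA)
  obtain ⟨hxC, hxA⟩ := Finset.mem_sdiff.1 hx
  refine ⟨x, hx, hA.insert hC hxC hxA fun i hi hix => ?_⟩
  by_contra hiA
  exact hix.not_ge (hmin (Finset.mem_sdiff.2 ⟨hi, hiA⟩) hix.le)

end Sortable

theorem csortables_join_distributive_general [DecidableEq B] (cs : CoxeterSystem M W)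
    (c : List B) (ω : ℕ → B) :
    (Sortable cs c ω ∅) ∧
    (∀ A C : Finset ℕ, Sortable cs c ω A → Sortable cs c ω C →
      Sortable cs c ω (A ∪ C)) ∧
    (∀ A C : Finset ℕ, Sortable cs c ω A → Sortable cs c ω C → A ⊂ C →
      (¬ ∃ D : Finset ℕ, Sortable cs c ω D ∧ A ⊂ D ∧ D ⊂ C) →
      ¬ ∃ D : Finset ℕ, IsSortedInf cs ω D ∧ A ⊂ D ∧ D ⊂ C) ∧
    (∀ A C : Finset ℕ, Sortable cs c ω A → Sortable cs c ω C → ¬ C ⊆ A →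
      ∃ x ∈ C \ A, Sortable cs c ω (insert x A)) := by
  have haug : ∀ A C : Finset ℕ, Sortable cs c ω A → Sortable cs c ω C → ¬ C ⊆ A →
      ∃ x ∈ C \ A, Sortable cs c ω (insert x A) := fun _ _ hA hC => hA.exists_insert hC
  refine ⟨sortable_empty, fun _ _ hA hC => union_of_augmentation haug hA hC, ?_, haug⟩
  rintro A C hA hC hAC hcover ⟨D, -, hAD, hDC⟩
  exact (covBy_of_augmentation haug hA hC hAC hcover).2 hAD hDC

/-- for a Coxeter word `c` and the cyclic word `c^∞`, the c-sortable
elements form a join-sublattice of the `c^∞`-sorting order (closed under unions,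
containing the bottom element) which preserves cover relations, and the restriction of
the `c^∞`-sorting order to c-sortable elements is a join-distributive lattice (i.e. the
family of c-sortable sorted index sets is an antimatroid). -/
theorem csortables_join_distributive [DecidableEq B] (cs : CoxeterSystem M W)
    (c : List B) (hnd : c.Nodup) (hall : ∀ b : B, b ∈ c) (hpos : 0 < c.length)
    (ω : ℕ → B) (hω : ∀ i, ω i = c.get ⟨i % c.length, Nat.mod_lt i hpos⟩) :
    (Sortable cs c ω ∅) ∧
    (∀ A C : Finset ℕ, Sortable cs c ω A → Sortable cs c ω C →
      Sortable cs c ω (A ∪ C)) ∧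
    (∀ A C : Finset ℕ, Sortable cs c ω A → Sortable cs c ω C → A ⊂ C →
      (¬ ∃ D : Finset ℕ, Sortable cs c ω D ∧ A ⊂ D ∧ D ⊂ C) →
      ¬ ∃ D : Finset ℕ, IsSortedInf cs ω D ∧ A ⊂ D ∧ D ⊂ C) ∧
    (∀ A C : Finset ℕ, Sortable cs c ω A → Sortable cs c ω C → ¬ C ⊆ A →
      ∃ x ∈ C \ A, Sortable cs c ω (insert x A)) :=
  csortables_join_distributive_general cs c ω

end SortingPaper
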